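/- arXiv:2002.06933 — 7 statements merged into one kernel-verified Lean document; each statement's English description precedes it below -/
import Mathlib

section
/- Let X be a finite two-wide poset and suppose w, y ∈ X satisfy w < y but not w ⋖ y. Then there exist elements x, x̃ ∈ X with x ≠ x̃ such that w ⋖ x < y and w ⋖ x̃ < y. -/
/-- A poset is *two-wide* if for all `x ⋖ z ⋖ y` there is some `z' ≠ z`
with `x ⋖ z' ⋖ y`. -/
def TwoWide (X : Type) [PartialOrder X] : Prop :=
  ∀ x z y : X, x ⋖ z → z ⋖ y → ∃ z' : X, z' ≠ z ∧ x ⋖ z' ∧ z' ⋖ y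

/-- A poset is *down-wide* if every non-minimal element covers at least two elements. -/
def DownWide (X : Type) [PartialOrder X] : Prop :=
  ∀ x : X, ¬ IsMin x → 2 ≤ Nat.card {y : X | y ⋖ x}

/-- A *Morse function* on a finite poset: for every `x` there is at most one `y` with
`x ⋖ y` and `f x ≥ f y`, and at most one `w` with `w ⋖ x` and `f w ≥ f x`. -/
def IsMorseFunction {X : Type} [PartialOrder X] (f : X → ℝ) : Prop :=
  ∀ x : X, {y : X | x ⋖ y ∧ f x ≥ f y}.Subsingleton ∧
    {w : X | w ⋖ x ∧ f w ≥ f x}.Subsingleton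

/-- A point is *critical* for `f` when both exceptional sets are empty. -/
def IsCriticalPoint {X : Type} [PartialOrder X] (f : X → ℝ) (x : X) : Prop :=
  {y : X | x ⋖ y ∧ f x ≥ f y} = ∅ ∧ {w : X | w ⋖ x ∧ f w ≥ f x} = ∅

/-- The *Exclusion condition*: for every regular point exactly one of the two
exceptional elements exists (and it is unique). -/
def SatisfiesExclusion {X : Type} [PartialOrder X] (f : X → ℝ) : Prop :=
  ∀ x : X, ¬ IsCriticalPoint f x →
    Xor' (∃! y : X, x ⋖ y ∧ f x ≥ f y) (∃! w : X, w ⋖ x ∧ f w ≥ f x)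

/-- The sublevel set `X_a = ⋃_{f x ≤ a} U_x`. -/
def sublevel {X : Type} [PartialOrder X] (f : X → ℝ) (a : ℝ) : Set X :=
  {y : X | ∃ x : X, f x ≤ a ∧ y ≤ x}

/-- **Key Lemma.** In a finite two-wide poset, if `w < y` and `y` does not cover `w`,
then there are two distinct elements `x ≠ x̃` with `w ⋖ x < y` and `w ⋖ x̃ < y`. -/
theorem key_lemma {X : Type} [PartialOrder X] [Fintype X] (htw : TwoWide X)
    {w y : X} (hlt : w < y) (hnotcov : ¬ w ⋖ y) :
    ∃ x x' : X, x ≠ x' ∧ (w ⋖ x ∧ x < y) ∧ (w ⋖ x' ∧ x' < y) := by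
  obtain ⟨x, hwx, hxy⟩ := exists_covBy_le_of_lt hlt
  have hxy : x < y := hxy.lt_of_ne fun h => hnotcov (h ▸ hwx)
  -- Two-wideness applied to `w ⋖ x ⋖ z`, where `z ≤ y`, gives the second element.
  obtain ⟨z, hxz, hzy⟩ := exists_covBy_le_of_lt hxy
  obtain ⟨x', hne, hwx', hxz'⟩ := htw w x z hwx hxz
  exact ⟨x, x', hne.symm, ⟨hwx, hxy⟩, ⟨hwx', hxz'.lt.trans_le hzy⟩⟩
end

section
/- (Exclusion Lemma) Let X be a finite two-wide poset and f : X → ℝ a Morse function on X. Then f satisfies the Exclusion condition: for every regular point x ∈ X, exactly one of the following holds: (1) there exists exactly one y with x ⋖ y and f(x) ≥ f(y); (2) there exists exactly one w with w ⋖ x and f(w) ≥ f(x). -/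
/-- If `w ⋖ x ⋖ y` with `f w ≥ f x ≥ f y`, a second element `z` between `w` and `y` must satisfy
`f w < f z` (as `x` is already the exceptional cover of `w`) and `f z < f y` (as `x` is already the
exceptional element covered by `y`), which contradicts `f w ≥ f y`. -/
theorem not_exceptional_both {X : Type} [PartialOrder X] (htw : TwoWide X) {f : X → ℝ}
    (hf : IsMorseFunction f) {w x y : X} (hwx : w ⋖ x) (hxy : x ⋖ y)
    (h₁ : f w ≥ f x) (h₂ : f x ≥ f y) : False := by
  obtain ⟨z, hne, hwz, hzy⟩ := htw w x y hwx hxy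
  have hlt : f w < f z := by
    by_contra h
    exact hne ((hf w).1 ⟨hwz, not_lt.mp h⟩ ⟨hwx, h₁⟩)
  have hlt' : f z < f y := by
    by_contra h
    exact hne ((hf y).2 ⟨hzy, not_lt.mp h⟩ ⟨hxy, h₂⟩)
  linarith

/-- **Exclusion Lemma.** A Morse function on a finite two-wide poset satisfies the
Exclusion condition. -/
theorem exclusion_lemma {X : Type} [PartialOrder X] [Fintype X] (htw : TwoWide X)
    (f : X → ℝ) (hf : IsMorseFunction f) : SatisfiesExclusion f := by
  intro x hx
  by_cases hup : ∃ y : X, x ⋖ y ∧ f x ≥ f y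
  · obtain ⟨y, hy⟩ := hup
    refine Or.inl ⟨⟨y, hy, fun y' hy' => (hf x).1 hy' hy⟩, ?_⟩
    rintro ⟨w, hw, -⟩
    exact not_exceptional_both htw hf hw.1 hy.1 hw.2 hy.2
  · have hdown : ∃ w : X, w ⋖ x ∧ f w ≥ f x := by
      by_contra hdown
      exact hx ⟨Set.eq_empty_of_forall_notMem fun y hy => hup ⟨y, hy⟩,
        Set.eq_empty_of_forall_notMem fun w hw => hdown ⟨w, hw⟩⟩
    obtain ⟨w, hw⟩ := hdown
    exact Or.inr ⟨⟨w, hw, fun w' hw' => (hf x).2 hw' hw⟩, fun h => hup h.exists⟩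
end

section
/- Let X be a finite poset and f : X → ℝ a Morse function satisfying the Exclusion condition. Then there exists a Morse matching M_f on X whose set of critical points equals the set of critical points of f. In particular, for any Morse function f on a finite two-wide poset X there exists a Morse matching M_f with crit(M_f) = crit(f). -/
/-- A *matching* on a poset: a set of covering pairs so that every element belongs
to at most one pair. -/
def IsMatching {X : Type} [PartialOrder X] (M : Set (X × X)) : Prop :=
  (∀ p ∈ M, p.1 ⋖ p.2) ∧ ∀ x : X, {p ∈ M | p.1 = x ∨ p.2 = x}.Subsingleton

/-- One step of the directed graph obtained from the Hasse diagram by orienting the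
edges of `M` upwards and all the remaining Hasse edges downwards. -/
def matchingStep {X : Type} [PartialOrder X] (M : Set (X × X)) (u v : X) : Prop :=
  ((u, v) ∈ M ∧ u ⋖ v) ∨ (v ⋖ u ∧ (v, u) ∉ M)

/-- A *Morse matching* is a matching whose associated directed graph has no directed
cycle. -/
def IsMorseMatching {X : Type} [PartialOrder X] (M : Set (X × X)) : Prop :=
  IsMatching M ∧ ∀ x : X, ¬ Relation.TransGen (matchingStep M) x x

/-- The critical points of a matching: the points belonging to no pair of `M`. -/
def matchingCrit {X : Type} [PartialOrder X] (M : Set (X × X)) : Set X :=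
  {x : X | ∀ p ∈ M, x ≠ p.1 ∧ x ≠ p.2}

/-- No element is exceptional both upwards and downwards: no two consecutive covering relations
`w ⋖ x ⋖ y` have `f w ≥ f x ≥ f y`. -/
def NoDescendingChain {X : Type} [PartialOrder X] (f : X → ℝ) : Prop :=
  ∀ w x y : X, w ⋖ x → x ⋖ y → f x ≤ f w → ¬ f y ≤ f x

/-- The set of covering pairs `x ⋖ y` along which `f` does not increase. -/
def descentPairs {X : Type} [PartialOrder X] (f : X → ℝ) : Set (X × X) :=
  {p | p.1 ⋖ p.2 ∧ f p.2 ≤ f p.1}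

theorem SatisfiesExclusion.noDescendingChain {X : Type} [PartialOrder X] {f : X → ℝ}
    (hf : IsMorseFunction f) (h : SatisfiesExclusion f) : NoDescendingChain f := by
  intro w x y hwx hxy h1 h2
  have hup : ∃! y : X, x ⋖ y ∧ f x ≥ f y :=
    ⟨y, ⟨hxy, h2⟩, fun z hz => (hf x).1 hz ⟨hxy, h2⟩⟩
  have hdown : ∃! w : X, w ⋖ x ∧ f w ≥ f x :=
    ⟨w, ⟨hwx, h1⟩, fun z hz => (hf x).2 hz ⟨hwx, h1⟩⟩
  have hreg : ¬ IsCriticalPoint f x := fun hc =>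
    Set.eq_empty_iff_forall_notMem.1 hc.1 y ⟨hxy, h2⟩
  rcases h x hreg with ⟨_, hn⟩ | ⟨_, hn⟩
  · exact hn hdown
  · exact hn hup

theorem TwoWide.noDescendingChain {X : Type} [PartialOrder X] {f : X → ℝ}
    (hf : IsMorseFunction f) (h : TwoWide X) : NoDescendingChain f := by
  intro w x y hwx hxy h1 h2
  obtain ⟨z, hne, hwz, hzy⟩ := h w x y hwx hxy
  have hz1 : f w < f z := by
    by_contra hc
    exact hne ((hf w).1 ⟨hwz, not_lt.1 hc⟩ ⟨hwx, h1⟩)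
  have hz2 : f z < f y := by
    by_contra hc
    exact hne ((hf y).2 ⟨hzy, not_lt.1 hc⟩ ⟨hxy, h2⟩)
  linarith

theorem isMatching_descentPairs {X : Type} [PartialOrder X] {f : X → ℝ}
    (hf : IsMorseFunction f) (h : NoDescendingChain f) : IsMatching (descentPairs f) := by
  refine ⟨fun p hp => hp.1, ?_⟩
  rintro x ⟨a, b⟩ ⟨⟨hab, hfab⟩, hx⟩ ⟨c, d⟩ ⟨⟨hcd, hfcd⟩, hx'⟩
  dsimp only at hab hfab hx hcd hfcd hx'
  rcases hx with rfl | rfl <;> rcases hx' with rfl | rfl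
  · rw [(hf c).1 ⟨hab, hfab⟩ ⟨hcd, hfcd⟩]
  · exact absurd hfab (h _ _ _ hcd hab hfcd)
  · exact absurd hfcd (h _ _ _ hab hcd hfab)
  · rw [(hf d).2 ⟨hab, hfab⟩ ⟨hcd, hfcd⟩]

/-- Along a directed path, either `f` drops strictly, or it does not increase and the path
moves strictly up in the order. -/
theorem descent_of_transGen {X : Type} [PartialOrder X] {f : X → ℝ} {u v : X}
    (h : Relation.TransGen (matchingStep (descentPairs f)) u v) :
    f v < f u ∨ (f v ≤ f u ∧ u < v) := by
  have step : ∀ {a b : X}, matchingStep (descentPairs f) a b →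
      f b < f a ∨ (f b ≤ f a ∧ a < b) := by
    rintro a b (⟨hm, hab⟩ | ⟨hba, hm⟩)
    · exact Or.inr ⟨hm.2, hab.lt⟩
    · exact Or.inl (not_le.1 fun hle => hm ⟨hba, hle⟩)
  induction h with
  | single h => exact step h
  | tail _ h ih =>
    rcases ih with h1 | ⟨h1, h2⟩ <;> rcases step h with h3 | ⟨h3, h4⟩
    · exact Or.inl (h3.trans h1)
    · exact Or.inl (h3.trans_lt h1)
    · exact Or.inl (h3.trans_le h1)
    · exact Or.inr ⟨h3.trans h1, h2.trans h4⟩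

theorem matchingCrit_descentPairs {X : Type} [PartialOrder X] (f : X → ℝ) :
    matchingCrit (descentPairs f) = {x : X | IsCriticalPoint f x} := by
  ext x
  simp only [Set.mem_ofPred_eq, matchingCrit, IsCriticalPoint, Set.eq_empty_iff_forall_notMem]
  constructor
  · intro h
    exact ⟨fun y hy => (h (x, y) hy).1 rfl, fun w hw => (h (w, x) hw).2 rfl⟩
  · rintro ⟨h1, h2⟩ ⟨a, b⟩ hp
    exact ⟨fun e => h1 b (e ▸ hp), fun e => h2 a (e ▸ hp)⟩

theorem NoDescendingChain.exists_morseMatching {X : Type} [PartialOrder X] {f : X → ℝ}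
    (hf : IsMorseFunction f) (h : NoDescendingChain f) :
    ∃ M : Set (X × X), IsMorseMatching M ∧
      matchingCrit M = {x : X | IsCriticalPoint f x} := by
  refine ⟨descentPairs f, ⟨isMatching_descentPairs hf h, fun x hx => ?_⟩,
    matchingCrit_descentPairs f⟩
  rcases descent_of_transGen hx with h1 | ⟨_, h1⟩ <;> exact lt_irrefl _ h1

/-- A Morse function satisfying the Exclusion condition has an associated Morse
matching with the same critical set; in particular this holds for every Morse
function on a finite two-wide poset. -/
theorem morse_function_gives_morse_matching {X : Type} [PartialOrder X] [Fintype X]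
    (f : X → ℝ) (hf : IsMorseFunction f) :
    (SatisfiesExclusion f →
      ∃ M : Set (X × X), IsMorseMatching M ∧
        matchingCrit M = {x : X | IsCriticalPoint f x}) ∧
    (TwoWide X →
      ∃ M : Set (X × X), IsMorseMatching M ∧
        matchingCrit M = {x : X | IsCriticalPoint f x}) := by
  exact ⟨fun h => (h.noDescendingChain hf).exists_morseMatching hf,
    fun h => (h.noDescendingChain hf).exists_morseMatching hf⟩
end

section
/- Let X be a finite graded poset and f : X → ℝ a Morse function satisfying the Exclusion condition. Then there exists an order-preserving Morse function f' : X → ℝ satisfying the Exclusion condition whose associated matching M_{f'} = {(w,x) : w ⋖ x and f'(w) ≥ f'(x)} equals the associated matching M_f of f. -/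
/-- A finite poset is *graded* when every covering step raises the height by exactly
one; equivalently, all maximal chains in every `U_x` have the same length. -/
def IsGraded (X : Type) [PartialOrder X] : Prop :=
  ∀ x y : X, x ⋖ y → Order.height y = Order.height x + 1

/-- The matching associated to a Morse function:
`M_f = {(w, x) : w ⋖ x and f w ≥ f x}`. -/
def assocMatching {X : Type} [PartialOrder X] (f : X → ℝ) : Set (X × X) :=
  {p : X × X | p.1 ⋖ p.2 ∧ f p.1 ≥ f p.2}

/-- By Exclusion, the lower end `w` of a matched pair `w ⋖ x` is not the upper end of another. -/
theorem not_exceptional_below {X : Type} [PartialOrder X] {f : X → ℝ}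
    (hf : IsMorseFunction f) (hex : SatisfiesExclusion f) {v w x : X}
    (hwx : w ⋖ x) (hfwx : f w ≥ f x) (hvw : v ⋖ w) : ¬ f v ≥ f w := by
  intro hfvw
  have hreg : ¬ IsCriticalPoint f w := fun h =>
    Set.eq_empty_iff_forall_notMem.1 h.1 x ⟨hwx, hfwx⟩
  have hup : ∃! y : X, w ⋖ y ∧ f w ≥ f y :=
    ⟨x, ⟨hwx, hfwx⟩, fun y hy => (hf w).1 hy ⟨hwx, hfwx⟩⟩
  have hdown : ∃! u : X, u ⋖ w ∧ f u ≥ f w :=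
    ⟨v, ⟨hvw, hfvw⟩, fun u hu => (hf w).2 hu ⟨hvw, hfvw⟩⟩
  rcases hex w hreg with h | h
  · exact h.2 hdown
  · exact h.2 hup

/-- A map sending the upper end of each matched pair to its lower end and fixing every other
point. -/
theorem exists_lowerEnd {X : Type} [PartialOrder X] {f : X → ℝ}
    (hf : IsMorseFunction f) (hex : SatisfiesExclusion f) :
    ∃ L : X → X, (∀ x, L x = x ∨ (L x ⋖ x ∧ f (L x) ≥ f x)) ∧
      ∀ w x, w ⋖ x → f w ≥ f x → L w = w ∧ L x = w := by
  classical
  refine ⟨fun x => if h : ∃ w, w ⋖ x ∧ f w ≥ f x then h.choose else x, fun x => ?_,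
    fun w x hwx hfwx => ⟨?_, ?_⟩⟩
  · by_cases h : ∃ w, w ⋖ x ∧ f w ≥ f x
    · right
      simpa only [dif_pos h] using h.choose_spec
    · left
      simp only [dif_neg h]
  · have h : ¬ ∃ v, v ⋖ w ∧ f v ≥ f w := fun ⟨v, hvw, hfvw⟩ =>
      not_exceptional_below hf hex hwx hfwx hvw hfvw
    simp only [dif_neg h]
  · have h : ∃ v, v ⋖ x ∧ f v ≥ f x := ⟨w, hwx, hfwx⟩
    simp only [dif_pos h]
    exact (hf x).2 h.choose_spec ⟨hwx, hfwx⟩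

/-- If two functions have the same exceptional coverings, then the Morse property and the
Exclusion condition transfer between them, and their matchings agree. -/
theorem transfer_of_exceptional_iff {X : Type} [PartialOrder X] {f g : X → ℝ}
    (h : ∀ x y : X, x ⋖ y → (g x ≥ g y ↔ f x ≥ f y))
    (hf : IsMorseFunction f) (hex : SatisfiesExclusion f) :
    IsMorseFunction g ∧ SatisfiesExclusion g ∧ assocMatching g = assocMatching f := by
  have h' : ∀ x y : X, (x ⋖ y ∧ g x ≥ g y) ↔ (x ⋖ y ∧ f x ≥ f y) := fun x y =>
    and_congr_right (h x y)
  refine ⟨?_, ?_, ?_⟩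
  · simpa only [IsMorseFunction, h'] using hf
  · simpa only [SatisfiesExclusion, IsCriticalPoint, h'] using hex
  · simp only [assocMatching, h']

/-- On a finite graded poset, every Morse function satisfying the Exclusion
condition can be replaced with an order-preserving one with the same associated
matching, still Morse and satisfying the Exclusion condition. -/
theorem exists_order_preserving_morse {X : Type} [PartialOrder X] [Fintype X]
    (hgr : IsGraded X) (f : X → ℝ) (hf : IsMorseFunction f)
    (hex : SatisfiesExclusion f) :
    ∃ f' : X → ℝ, Monotone f' ∧ IsMorseFunction f' ∧ SatisfiesExclusion f' ∧
      assocMatching f' = assocMatching f := by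
  classical
  let _ : LocallyFiniteOrder X := Fintype.toLocallyFiniteOrder
  obtain ⟨L, hL, hLM⟩ := exists_lowerEnd hf hex
  obtain ⟨K, hK⟩ : ∃ K : ℝ, ∀ x y, f x < K + f y := by
    obtain ⟨B, hB⟩ := (Set.finite_range fun p : X × X => f p.1 - f p.2).bddAbove
    refine ⟨B + 1, fun x y => ?_⟩
    have := hB ⟨(x, y), rfl⟩
    dsimp only at this
    linarith
  -- Heights are finite in a finite poset, so `ENat.toNat` loses nothing.
  obtain ⟨r, hr⟩ : ∃ r : X → ℕ, ∀ x y, x ⋖ y → r y = r x + 1 := by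
    refine ⟨fun x => (Order.height x).toNat, fun x y hxy => ?_⟩
    have hx : Order.height x ≠ ⊤ := fun htop => by
      obtain ⟨p, -, hp⟩ := Order.height_eq_top_iff.1 htop (Fintype.card X)
      exact absurd p.length_lt_card (by omega)
    simp only [hgr x y hxy]
    rw [ENat.toNat_add hx ENat.one_ne_top, ENat.toNat_one]
  let g : X → ℝ := fun x => r (L x) * K + f (L x)
  have hpair : ∀ x y, x ⋖ y → f x ≥ f y → g x = g y := fun x y hxy hfxy => by
    simp only [g, (hLM x y hxy hfxy).1, (hLM x y hxy hfxy).2]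
  have hstrict : ∀ x y, x ⋖ y → ¬ f x ≥ f y → g x < g y := fun x y hxy hfxy => by
    have hrxy := hr x y hxy
    have hlex : r (L x) < r (L y) ∨ (r (L x) = r (L y) ∧ f (L x) < f (L y)) := by
      rcases hL x with hx | ⟨hx, hfx⟩ <;> rcases hL y with hy | ⟨hy, hfy⟩
      · left
        rw [hx, hy]
        omega
      · right
        have := hr _ _ hy
        rw [hx]
        exact ⟨by omega, by linarith⟩
      · left
        have := hr _ _ hx
        rw [hy]
        omega
      · left
        have := hr _ _ hx
        have := hr _ _ hy
        omega
    rcases hlex with h | ⟨h, hlt⟩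
    · have hK0 : 0 < K := by linarith [hK x x]
      have h1 : (r (L x) : ℝ) + 1 ≤ r (L y) := by exact_mod_cast h
      have h2 := mul_le_mul_of_nonneg_right h1 hK0.le
      have h3 := hK (L x) (L y)
      simp only [g]
      linarith
    · simp only [g, h]
      linarith
  have hiff : ∀ x y, x ⋖ y → (g x ≥ g y ↔ f x ≥ f y) := fun x y hxy =>
    ⟨fun h => by_contra fun hn => absurd (hstrict x y hxy hn) (not_lt.2 h),
      fun h => (hpair x y hxy h).ge⟩
  refine ⟨g, (monotone_iff_forall_covBy g).2 fun x y hxy => ?_,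
    transfer_of_exceptional_iff hiff hf hex⟩
  by_cases h : f x ≥ f y
  · exact (hpair x y hxy h).le
  · exact (hstrict x y hxy h).le
end

section
/- Let X be a path-connected finite down-wide poset and f : X → ℝ an injective Morse function. Let a, b ∈ ℝ with a < b. If b₀(X_a) < b₀(X_b), then there exists a critical value c ∈ (a,b] of f such that b₀(X_c) = b₀(X_a) + 1; moreover, c = f(x) for a minimal element x of X. -/
/-- The number of connected components of a topological space. -/
noncomputable def b0 (Y : Type) [TopologicalSpace Y] : ℕ :=
  Nat.card (ConnectedComponents Y)

/-- Two points of a preconnected set `U` lie in the same component of `S ∪ U`. -/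
lemma mk_eq_mk_of_mem {X : Type} [TopologicalSpace X] {S U : Set X} (hU : IsPreconnected U)
    {p q : ↥(S ∪ U)} (hp : (p : X) ∈ U) (hq : (q : X) ∈ U) :
    (p : ConnectedComponents ↥(S ∪ U)) = (q : ConnectedComponents ↥(S ∪ U)) := by
  have hpre : IsPreconnected ((↑) ⁻¹' U : Set ↥(S ∪ U)) := by
    rw [← Topology.IsInducing.subtypeVal.isPreconnected_image, Subtype.image_preimage_coe,
      Set.inter_eq_right.mpr Set.subset_union_right]
    exact hU
  exact ConnectedComponents.coe_eq_coe'.mpr (hpre.subset_connectedComponent hq hp)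

/-- The map on components induced by the inclusion `S ⊆ S ∪ U`. -/
noncomputable def componentsInclusion {X : Type} [TopologicalSpace X] (S U : Set X) :
    ConnectedComponents ↥S → ConnectedComponents ↥(S ∪ U) :=
  (continuous_inclusion (Set.subset_union_left (s := S) (t := U))).connectedComponentsMap

lemma componentsInclusion_mk {X : Type} [TopologicalSpace X] (S U : Set X) (s : ↥S) :
    componentsInclusion S U (s : ConnectedComponents ↥S) =
      ((⟨s, Or.inl s.2⟩ : ↥(S ∪ U)) : ConnectedComponents ↥(S ∪ U)) := rfl

lemma b0_union_le {X : Type} [TopologicalSpace X] [Finite X] {S U : Set X}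
    (hU : IsPreconnected U) {x : X} (hx : x ∈ U) : b0 ↥(S ∪ U) ≤ b0 ↥S + 1 := by
  have : Finite (ConnectedComponents ↥S) := Quotient.finite _
  unfold b0
  rw [← Finite.card_option]
  -- The one possibly new component is that of `x`, the image of `none`.
  refine Nat.card_le_card_of_surjective
    (fun o : Option (ConnectedComponents ↥S) => o.elim
      ((⟨x, Or.inr hx⟩ : ↥(S ∪ U)) : ConnectedComponents ↥(S ∪ U)) (componentsInclusion S U)) ?_
  intro c
  obtain ⟨⟨y, hy⟩, rfl⟩ := ConnectedComponents.surjective_coe c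
  rcases hy with hy | hy
  · exact ⟨some ((⟨y, hy⟩ : ↥S) : ConnectedComponents ↥S), rfl⟩
  · exact ⟨none, mk_eq_mk_of_mem hU hx hy⟩

lemma b0_union_le_of_inter {X : Type} [TopologicalSpace X] [Finite X] {S U : Set X}
    (hU : IsPreconnected U) {w : X} (hwS : w ∈ S) (hwU : w ∈ U) : b0 ↥(S ∪ U) ≤ b0 ↥S := by
  have : Finite (ConnectedComponents ↥S) := Quotient.finite _
  refine Nat.card_le_card_of_surjective (componentsInclusion S U) ?_
  intro c
  obtain ⟨⟨y, hy⟩, rfl⟩ := ConnectedComponents.surjective_coe c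
  rcases hy with hy | hy
  · exact ⟨((⟨y, hy⟩ : ↥S) : ConnectedComponents ↥S), rfl⟩
  · exact ⟨((⟨w, hwS⟩ : ↥S) : ConnectedComponents ↥S), mk_eq_mk_of_mem hU hwU hy⟩

/-- An open set containing `x` contains all of `Set.Iic x`, so `Set.Iic x` cannot be separated. -/
lemma isPreconnected_Iic_of_isLowerSet {X : Type} [PartialOrder X] [TopologicalSpace X]
    [Topology.IsLowerSet X] (x : X) : IsPreconnected (Set.Iic x) := by
  rintro u v hu hv huv ⟨p, hp, hpu⟩ ⟨q, hq, hqv⟩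
  rcases huv (Set.self_mem_Iic : x ∈ Set.Iic x) with hxu | hxv
  · exact ⟨q, hq, Topology.IsLowerSet.isOpen_iff_isLowerSet.mp hu hq hxu, hqv⟩
  · exact ⟨p, hp, hpu, Topology.IsLowerSet.isOpen_iff_isLowerSet.mp hv hp hxv⟩

/-- The strict sublevel set of `t`: the union of the `U_x` with `f x < t`. -/
def strictSublevel {X : Type} [PartialOrder X] (f : X → ℝ) (t : ℝ) : Set X :=
  {y : X | ∃ x : X, f x < t ∧ y ≤ x}

lemma sublevel_eq_strictSublevel_union {X : Type} [PartialOrder X] {f : X → ℝ}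
    (hinj : Function.Injective f) (x : X) :
    sublevel f (f x) = strictSublevel f (f x) ∪ Set.Iic x := by
  ext y
  constructor
  · rintro ⟨z, hz, hyz⟩
    rcases hz.lt_or_eq with h | h
    · exact Or.inl ⟨z, h, hyz⟩
    · exact Or.inr (hinj h ▸ hyz)
  · rintro (⟨z, hz, hyz⟩ | hy)
    · exact ⟨z, hz.le, hyz⟩
    · exact ⟨x, le_rfl, hy⟩

/-- Sublevel sets only jump at values of `f`: the union of the `U_x` with `P x`, where `P` is a
condition such as `f x ≤ b` or `f x < b`, is either `X_a` or the sublevel set of a value above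
`a`. -/
lemma exists_sublevel_eq {X : Type} [PartialOrder X] [Finite X] (f : X → ℝ) (a : ℝ)
    (P : X → Prop) (hP : ∀ x y, f x ≤ f y → P y → P x) (ha : ∀ x, f x ≤ a → P x) :
    {y : X | ∃ x : X, P x ∧ y ≤ x} = sublevel f a ∨
      ∃ z, P z ∧ a < f z ∧ {y : X | ∃ x : X, P x ∧ y ≤ x} = sublevel f (f z) := by
  by_cases h : ∃ z, P z ∧ a < f z
  · obtain ⟨z, ⟨hzP, hza⟩, hmax⟩ := Set.exists_max_image {z | P z ∧ a < f z} f (Set.toFinite _) h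
    refine Or.inr ⟨z, hzP, hza, ?_⟩
    ext y
    refine exists_congr fun x => and_congr_left fun _ => ⟨fun hx => ?_, fun hx => hP x z hx hzP⟩
    rcases le_or_gt (f x) a with hxa | hxa
    · exact hxa.trans hza.le
    · exact hmax x ⟨hx, hxa⟩
  · push Not at h
    left
    ext y
    exact exists_congr fun x => and_congr_left fun _ => ⟨h x, ha x⟩

/-- If the number of connected components of the sublevel sets of an injective Morse
function on a path-connected finite down-wide poset increases from `X_a` to `X_b`,
then some critical value `c ∈ (a, b]`, attained at a minimal element, satisfies
`b₀(X_c) = b₀(X_a) + 1`. (The poset carries the topology whose open sets are the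
lower sets.) -/
theorem critical_value_of_new_component {X : Type} [PartialOrder X] [Fintype X]
    [TopologicalSpace X] [Topology.IsLowerSet X] [PathConnectedSpace X]
    (hdw : DownWide X) (f : X → ℝ) (hf : IsMorseFunction f)
    (hinj : Function.Injective f) {a b : ℝ} (hab : a < b)
    (hb0 : b0 ↥(sublevel f a) < b0 ↥(sublevel f b)) :
    ∃ x : X, IsCriticalPoint f x ∧ f x ∈ Set.Ioc a b ∧ IsMin x ∧
      b0 ↥(sublevel f (f x)) = b0 ↥(sublevel f a) + 1 := by
  -- `x` has the smallest value in `(a, b]` at which the number of components exceeds `b₀(X_a)`.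
  obtain ⟨x, ⟨hax, hxb, hbx⟩, hmin⟩ := Set.exists_min_image
    {x | a < f x ∧ f x ≤ b ∧ b0 ↥(sublevel f a) < b0 ↥(sublevel f (f x))} f (Set.toFinite _) (by
      rcases exists_sublevel_eq f a (fun x => f x ≤ b) (fun _ _ h h' => h.trans h')
        (fun _ h => h.trans hab.le) with h | ⟨z, hzb, haz, h⟩
      · change sublevel f b = _ at h
        rw [h] at hb0
        exact absurd hb0 (lt_irrefl _)
      · change sublevel f b = _ at h
        rw [h] at hb0
        exact ⟨z, haz, hzb, hb0⟩)
  have hS : b0 ↥(strictSublevel f (f x)) ≤ b0 ↥(sublevel f a) := by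
    rcases exists_sublevel_eq f a (fun z => f z < f x) (fun _ _ h h' => h.trans_lt h')
      (fun _ h => h.trans_lt hax) with h | ⟨z, hzx, haz, h⟩
    · change strictSublevel f (f x) = _ at h
      rw [h]
    · change strictSublevel f (f x) = _ at h
      rw [h]
      by_contra hlt
      exact absurd (hmin z ⟨haz, hzx.le.trans hxb, not_le.mp hlt⟩) (not_le.mpr hzx)
  rw [sublevel_eq_strictSublevel_union hinj x] at hbx
  have hle := b0_union_le (S := strictSublevel f (f x)) (isPreconnected_Iic_of_isLowerSet x)
    (Set.self_mem_Iic : x ∈ Set.Iic x)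
  have hdisj : ∀ w ≤ x, w ∉ strictSublevel f (f x) := fun w hw hwS => by
    have := b0_union_le_of_inter (isPreconnected_Iic_of_isLowerSet x) hwS hw
    omega
  have hxmin : IsMin x := by
    by_contra hnm
    have hcard := hdw x hnm
    have hsub : {y : X | y ⋖ x} ⊆ {w : X | w ⋖ x ∧ f w ≥ f x} := fun w hw =>
      ⟨hw, not_lt.mp fun hlt => hdisj w hw.le ⟨w, hlt, le_rfl⟩⟩
    have : Subsingleton {y : X | y ⋖ x} := ((hf x).2.anti hsub).coe_sort
    have := Finite.card_le_one_iff_subsingleton.mpr this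
    omega
  refine ⟨x, ⟨?_, ?_⟩, ⟨hax, hxb⟩, hxmin, ?_⟩
  · refine Set.eq_empty_of_forall_notMem fun y hy => ?_
    have hlt : f y < f x := lt_of_le_of_ne hy.2 fun h => hy.1.ne (hinj h).symm
    exact hdisj x le_rfl ⟨y, hlt, hy.1.le⟩
  · exact Set.eq_empty_of_forall_notMem fun w hw => hxmin.not_lt hw.1.lt
  · rw [sublevel_eq_strictSublevel_union hinj x]
    omega
end

section
/- Let X be a path-connected finite down-wide poset and f : X → ℝ an injective Morse function satisfying the Exclusion condition. Let a, b ∈ ℝ with a < b. Suppose the interval (a,b] contains no critical values of f and f⁻¹((a,b]) consists of a single regular point y. Then there exists z ∈ X_a such that z ⋖ y or y ⋖ z. -/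
/-- If `(a, b]` contains no critical values of an injective Morse function satisfying
the Exclusion condition on a path-connected finite down-wide poset, and
`f⁻¹((a, b])` consists of a single regular point `y`, then `y` is comparable by a
covering relation with some element of `X_a`. -/
theorem regular_point_attaches {X : Type} [PartialOrder X] [Fintype X]
    [TopologicalSpace X] [Topology.IsLowerSet X] [PathConnectedSpace X]
    (hdw : DownWide X) (f : X → ℝ) (hf : IsMorseFunction f)
    (hinj : Function.Injective f) (hex : SatisfiesExclusion f)
    {a b : ℝ} (hab : a < b)
    (hnocrit : ∀ x : X, IsCriticalPoint f x → f x ∉ Set.Ioc a b)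
    (y : X) (hy : f ⁻¹' Set.Ioc a b = {y}) (hyreg : ¬ IsCriticalPoint f y) :
    ∃ z ∈ sublevel f a, z ⋖ y ∨ y ⋖ z := by
  have hya : a < f y ∧ f y ≤ b := by
    have h : y ∈ f ⁻¹' Set.Ioc a b := hy ▸ Set.mem_singleton y
    exact h
  have low : ∀ z : X, f z < f y → z ∈ sublevel f a := by
    intro z hz
    refine ⟨z, ?_, le_rfl⟩
    by_contra! h
    have hzy : z ∈ f ⁻¹' Set.Ioc a b := ⟨h, hz.le.trans hya.2⟩
    rw [hy, Set.mem_singleton_iff] at hzy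
    exact hz.ne (congrArg f hzy)
  by_cases hup : {v : X | y ⋖ v ∧ f y ≥ f v} = ∅
  · have hdown : {w : X | w ⋖ y ∧ f w ≥ f y}.Nonempty :=
      Set.nonempty_iff_ne_empty.mpr fun h => hyreg ⟨hup, h⟩
    obtain ⟨w, hwy, hfw⟩ := hdown
    have hcard := hdw y fun hmin => hmin.not_lt hwy.lt
    have : Nontrivial {z : X | z ⋖ y} := Finite.one_lt_card_iff_nontrivial.mp hcard
    obtain ⟨⟨z, hzy⟩, hzw⟩ := exists_ne (⟨w, hwy⟩ : {z : X | z ⋖ y})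
    have hfz : f z < f y := by
      by_contra! h
      exact hzw (Subtype.ext ((hf y).2 ⟨hzy, h⟩ ⟨hwy, hfw⟩))
    exact ⟨z, low z hfz, Or.inl hzy⟩
  · obtain ⟨v, hyv, hfv⟩ := Set.nonempty_iff_ne_empty.mpr hup
    exact ⟨v, low v (lt_of_le_of_ne hfv (hinj.ne hyv.lt.ne')), Or.inr hyv⟩
end

section
/- (Canceling critical points) Let M be a Morse matching on a finite graded poset X. Suppose z and x are critical points of M of degrees p+1 and p respectively, and there is an element y ⋖ z of degree p and a unique M-path γ : z ≻ y = x₀ ⋖ z₀ ≻ x₁ ⋖ z₁ ≻ ⋯ ⋖ z_r ≻ x_r = x of index p from y to x, and there is no other M-path from any degree-p face of z to x. Then there exists a Morse matching M' on X such that crit(M') = crit(M) − {x, z}, and M' agrees with M except along the unique gradient path from ∂z to x. -/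
/-- `IsMPath M a γ b`: `γ` encodes an `M`-path
`a = x₀ ⋖ z₀ ≻ x₁ ⋖ z₁ ≻ ⋯ ⋖ z_{r−1} ≻ x_r = b`, as the list of pairs
`(z_i, x_{i+1})`; each `(x_i, z_i) ∈ M`, `x_{i+1} ⋖ z_i` and `x_i ≠ x_{i+1}`. -/
def IsMPath {X : Type} [PartialOrder X] (M : Set (X × X)) :
    X → List (X × X) → X → Prop
  | a, [], b => a = b
  | a, q :: rest, b =>
      ((a, q.1) ∈ M ∧ a ⋖ q.1 ∧ q.2 ⋖ q.1 ∧ q.2 ≠ a) ∧ IsMPath M q.2 rest b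

open Relation

/-! ### Reversing an interval of an acyclic relation -/

section Reversal

variable {X : Type}

/-- The points lying on a directed walk of the relation `G` from `z` to `x`. -/
def between (G : X → X → Prop) (z x : X) : Set X :=
  {v | ReflTransGen G z v ∧ ReflTransGen G v x}

/-- Reversing all the edges of an acyclic relation inside an interval keeps it acyclic. -/
theorem acyclic_of_reverse {G G' : X → X → Prop} {z x : X} (hG : ∀ a, ¬ TransGen G a a)
    (hG' : ∀ u v, G' u v → (G u v ∧ ¬ (u ∈ between G z x ∧ v ∈ between G z x)) ∨
      (G v u ∧ u ∈ between G z x ∧ v ∈ between G z x)) (a : X) : ¬ TransGen G' a a := by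
  have hS : ∀ u v, ReflTransGen G' u v → ReflTransGen G z u → ReflTransGen G z v := by
    intro u v h hu
    induction h with
    | refl => exact hu
    | tail _ h ih =>
      rcases hG' _ _ h with h | h
      · exact ih.tail h.1
      · exact h.2.2.1
  have hT : ∀ u v, ReflTransGen G' u v → ReflTransGen G v x → ReflTransGen G u x := by
    intro u v h hv
    induction h using ReflTransGen.head_induction_on with
    | refl => exact hv
    | head h _ ih =>
      rcases hG' _ _ h with h | h
      · exact ih.head h.1
      · exact h.2.1.2
  intro hcyc
  by_cases ha : a ∈ between G z x
  · have key : ∀ b, TransGen G' a b → b ∈ between G z x → TransGen G b a := by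
      intro b h
      induction h with
      | single h =>
        intro hb
        rcases hG' _ _ h with h | h
        · exact absurd ⟨ha, hb⟩ h.2
        · exact .single h.1
      | tail hac h ih =>
        intro hb
        have hc := And.intro (hS _ _ hac.to_reflTransGen ha.1) (hT _ _ (.single h) hb.2)
        rcases hG' _ _ h with h | h
        · exact absurd ⟨hc, hb⟩ h.2
        · exact .head h.1 (ih hc)
    exact hG a (key a hcyc ha)
  · have key : ∀ b, TransGen G' a b → ReflTransGen G' b a → TransGen G a b := by
      intro b h
      induction h with
      | single h =>
        intro hb
        rcases hG' _ _ h with h | h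
        · exact .single h.1
        · exact absurd h.2.1 ha
      | tail hac h ih =>
        intro hb
        have h0 := h
        rcases hG' _ _ h with h | h
        · exact (ih (hb.head h0)).tail h.1
        · exact absurd ⟨hS _ _ hb h.2.2.1, hT _ _ hac.to_reflTransGen h.2.1.2⟩ ha
    exact hG a (key a hcyc .refl)

end Reversal

/-! ### Directed walks and `M`-paths -/

section Paths

variable {X : Type} [PartialOrder X]

theorem IsMatching.eq_of_mem {M : Set (X × X)} (hM : IsMatching M) {q r : X × X} (hq : q ∈ M)
    (hr : r ∈ M) (v : X) (hqv : q.1 = v ∨ q.2 = v) (hrv : r.1 = v ∨ r.2 = v) : q = r :=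
  hM.2 v ⟨hq, hqv⟩ ⟨hr, hrv⟩

theorem IsMatching.not_lower_of_upper {M : Set (X × X)} (hM : IsMatching M) {a b c : X}
    (h : (a, b) ∈ M) : (b, c) ∉ M := by
  intro h'
  have := hM.eq_of_mem h h' b (.inr rfl) (.inl rfl)
  have h1 : a = b := congrArg Prod.fst this
  exact (hM.1 _ h).lt.ne h1

variable {h : X → ℕ} {M : Set (X × X)} {p : ℕ} {z x : X}

/-- A walk ending at a critical point `x` of degree `p` never visits degrees below `p`, and visits
degree `p` only at points that are not the upper point of a pair: from the upper point of a pair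
one can only go down. -/
theorem height_ge_of_reach (hh : ∀ u v : X, u ⋖ v → h v = h u + 1) (hM : IsMatching M)
    (hx : x ∈ matchingCrit M) (hpx : h x = p) {v : X} (hv : ReflTransGen (matchingStep M) v x) :
    p ≤ h v ∧ (h v = p → ∀ w, (w, v) ∉ M) := by
  induction hv using ReflTransGen.head_induction_on with
  | refl => exact ⟨hpx.ge, fun _ w hw => (hx _ hw).2 rfl⟩
  | head h1 hr ih =>
    rename_i a c
    rcases h1 with ⟨hac, hc⟩ | ⟨hc, hac⟩
    · have := hh _ _ hc
      have h2 : h c ≠ p := fun e => ih.2 e _ hac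
      exact ⟨by omega, fun _ w hw => hM.not_lower_of_upper hw hac⟩
    · have := hh _ _ hc
      exact ⟨by omega, fun e => by omega⟩

/-- Dual of `height_ge_of_reach`, for walks starting at a critical point. -/
theorem height_le_of_reach (hh : ∀ u v : X, u ⋖ v → h v = h u + 1) (hM : IsMatching M)
    (hz : z ∈ matchingCrit M) (hpz : h z = p + 1) {v : X}
    (hv : ReflTransGen (matchingStep M) z v) :
    h v ≤ p + 1 ∧ (h v = p + 1 → ∀ w, (v, w) ∉ M) := by
  induction hv with
  | refl => exact ⟨hpz.le, fun _ w hw => (hz _ hw).1 rfl⟩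
  | tail hr h1 ih =>
    rename_i a c
    rcases h1 with ⟨hac, hc⟩ | ⟨hc, hac⟩
    · have := hh _ _ hc
      have h2 : h a ≠ p + 1 := fun e => ih.2 e _ hac
      exact ⟨by omega, fun _ w => hM.not_lower_of_upper hac⟩
    · have := hh _ _ hc
      exact ⟨by omega, fun e => by omega⟩

/-- A walk to `x` starting in degree `p` is an `M`-path, and a walk starting in degree `p + 1` at
a point from which there is no way up is a downward step followed by an `M`-path. -/
theorem exists_mpath (hh : ∀ u v : X, u ⋖ v → h v = h u + 1) (hM : IsMatching M)
    (hx : x ∈ matchingCrit M) (hpx : h x = p) {v : X} (hv : ReflTransGen (matchingStep M) v x) :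
    (h v = p → ∃ σ, IsMPath M v σ x) ∧
    (h v = p + 1 → (∀ w, (v, w) ∉ M) → ∃ u σ, u ⋖ v ∧ (u, v) ∉ M ∧ IsMPath M u σ x) := by
  induction hv using ReflTransGen.head_induction_on with
  | refl => exact ⟨fun _ => ⟨[], rfl⟩, fun e => by omega⟩
  | head h1 h2 ih =>
    rename_i a c
    have hge := height_ge_of_reach hh hM hx hpx h2
    rcases h1 with ⟨hac, hc⟩ | ⟨hc, hac⟩
    · have := hh _ _ hc
      refine ⟨fun e => ?_, fun _ hw => absurd hac (hw c)⟩
      obtain ⟨u, σ, hu, huM, hσ⟩ := ih.2 (by omega) fun w => hM.not_lower_of_upper hac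
      refine ⟨(c, u) :: σ, ⟨hac, hc, hu, ?_⟩, hσ⟩
      rintro rfl
      exact huM hac
    · have := hh _ _ hc
      refine ⟨fun e => by omega, fun e _ => ?_⟩
      obtain ⟨σ, hσ⟩ := ih.1 (by omega)
      exact ⟨c, σ, hc, hac, hσ⟩

/-- The uniqueness of the path from `z` to `x` is inherited by all points `v` on the way: the
remainder of the path from `v` on is unique and is a final segment of `γ`. In particular `v` is
`z`, `y` or a point of `γ`. -/
theorem tail_unique (hh : ∀ u v : X, u ⋖ v → h v = h u + 1) (hM : IsMatching M)
    (hz : z ∈ matchingCrit M) (hpz : h z = p + 1)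
    (hx : x ∈ matchingCrit M) (hpx : h x = p) {y : X} {γ : List (X × X)}
    (huniq : ∀ (y' : X) (γ' : List (X × X)), y' ⋖ z → IsMPath M y' γ' x → y' = y ∧ γ' = γ)
    {v : X} (hv : ReflTransGen (matchingStep M) z v) (hvx : ReflTransGen (matchingStep M) v x) :
    v ∈ ({z, y} ∪ {u : X | ∃ r ∈ γ, u = r.1 ∨ u = r.2} : Set X) ∧
    (h v = p → ∃ σ, σ <:+ γ ∧ ∀ σ', IsMPath M v σ' x → σ' = σ) ∧
    (h v = p + 1 → ∃ u σ, u ∈ ({z, y} ∪ {u : X | ∃ r ∈ γ, u = r.1 ∨ u = r.2} : Set X) ∧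
      σ <:+ γ ∧ ∀ u' σ', u' ⋖ v → (u', v) ∉ M → IsMPath M u' σ' x → u' = u ∧ σ' = σ) := by
  induction hv with
  | refl =>
    exact ⟨by simp, fun e => by omega,
      fun _ => ⟨y, γ, by simp, List.suffix_refl _, fun u' σ' h1 _ h2 => huniq u' σ' h1 h2⟩⟩
  | tail hzb h1 ih =>
    rename_i b c
    have ih := ih (hvx.head h1)
    have hge := height_ge_of_reach hh hM hx hpx hvx
    have hgeb := height_ge_of_reach hh hM hx hpx (hvx.head h1)
    have hle := height_le_of_reach hh hM hz hpz hzb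
    have hlec := height_le_of_reach hh hM hz hpz (hzb.tail h1)
    rcases h1 with ⟨hac, hc⟩ | ⟨hc, hac⟩
    · have := hh _ _ hc
      obtain ⟨σ, hσ, hu⟩ := ih.2.1 (by omega)
      have hpre : ∀ u' σ', u' ⋖ c → (u', c) ∉ M → IsMPath M u' σ' x → (c, u') :: σ' = σ := by
        intro u' σ' h1 h2 h3
        refine hu _ ⟨⟨hac, hc, h1, ?_⟩, h3⟩
        rintro rfl
        exact h2 hac
      obtain ⟨u, τ, h1, h2, h3⟩ := (exists_mpath hh hM hx hpx hvx).2 (by omega)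
        fun w => hM.not_lower_of_upper hac
      have e := hpre u τ h1 h2 h3
      have hmem : (c, u) ∈ γ := hσ.subset (e ▸ List.mem_cons_self)
      refine ⟨.inr ⟨_, hmem, .inl rfl⟩, fun e => by omega, fun _ => ⟨u, τ,
        .inr ⟨_, hmem, .inr rfl⟩, (List.suffix_cons _ _).trans (e ▸ hσ), fun u' σ' k1 k2 k3 => ?_⟩⟩
      have e' := (hpre u' σ' k1 k2 k3).trans e.symm
      simpa using e'
    · have := hh _ _ hc
      obtain ⟨u, σ, hmem, hσ, hu⟩ := ih.2.2 (by omega)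
      obtain ⟨τ, h1⟩ := (exists_mpath hh hM hx hpx hvx).1 (by omega)
      have e := hu c τ hc hac h1
      refine ⟨e.1 ▸ hmem, fun _ => ⟨σ, hσ, fun σ' k => (hu c σ' hc hac k).2⟩, fun e => by omega⟩

end Paths

/-! ### The cancelled matching -/

/-- **Canceling critical points.** Let `M` be a Morse matching on a finite graded
poset, let `z` and `x` be critical points of `M` of degrees `p+1` and `p`, and
suppose there is `y ⋖ z` of degree `p` and a unique `M`-path `γ` from `y` to `x`
(and no `M`-path from any other face of `z` to `x`). Then there is a Morse matching
`M'` whose critical set is `crit(M) − {x, z}` and which agrees with `M` except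
along the gradient path from `∂z` to `x`. -/
theorem cancel_critical_points {X : Type} [PartialOrder X] [Fintype X]
    (hgr : IsGraded X) (M : Set (X × X)) (hM : IsMorseMatching M) (p : ℕ)
    (z x : X) (hz : z ∈ matchingCrit M) (hx : x ∈ matchingCrit M)
    (hdegz : Order.height z = (p : ℕ∞) + 1) (hdegx : Order.height x = (p : ℕ∞))
    (y : X) (hyz : y ⋖ z) (hdegy : Order.height y = (p : ℕ∞))
    (γ : List (X × X)) (hγ : IsMPath M y γ x)
    (huniq : ∀ (y' : X) (γ' : List (X × X)), y' ⋖ z → IsMPath M y' γ' x →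
      y' = y ∧ γ' = γ) :
    ∃ M' : Set (X × X), IsMorseMatching M' ∧
      matchingCrit M' = matchingCrit M \ {x, z} ∧
      ∀ q : X × X,
        q.1 ∉ ({z, y} ∪ {u : X | ∃ r ∈ γ, u = r.1 ∨ u = r.2} : Set X) →
        q.2 ∉ ({z, y} ∪ {u : X | ∃ r ∈ γ, u = r.1 ∨ u = r.2} : Set X) →
        (q ∈ M' ↔ q ∈ M) := by
  classical
  -- Degrees are finite, so they can be handled as natural numbers.
  obtain ⟨h, hh, hpz, hpx⟩ : ∃ h : X → ℕ, (∀ u v : X, u ⋖ v → h v = h u + 1) ∧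
      h z = p + 1 ∧ h x = p := by
    have hfin : ∀ a : X, Order.height a ≠ ⊤ := fun a => by
      have : Order.height a ≤ (Fintype.card X : ℕ∞) :=
        Order.height_le fun s _ => by exact_mod_cast s.length_lt_card.le
      exact (this.trans_lt (ENat.natCast_lt_top _)).ne
    refine ⟨fun a => (Order.height a).toNat, fun u v huv => ?_, ?_, ?_⟩
    · simp only [hgr u v huv]
      rw [ENat.toNat_add (hfin u) (by simp)]
      simp
    · simp only [hdegz]
      rfl
    · simp only [hdegx]
      rfl
  obtain ⟨hMm, hac⟩ := hM
  set G := matchingStep M with hG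
  set P := between G z x with hP
  have hdeg : ∀ v ∈ P, (h v = p ∧ ∀ w, (w, v) ∉ M) ∨ (h v = p + 1 ∧ ∀ w, (v, w) ∉ M) := by
    intro v hv
    have h1 := height_ge_of_reach hh hMm hx hpx hv.2
    have h2 := height_le_of_reach hh hMm hz hpz hv.1
    rcases Nat.lt_or_ge (h v) (p + 1) with h3 | h3
    · exact .inl ⟨by omega, h1.2 (by omega)⟩
    · exact .inr ⟨by omega, h2.2 (by omega)⟩
  have htail := fun v (hv : v ∈ P) => tail_unique hh hMm hz hpz hx hpx huniq hv.1 hv.2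
  have hnext : ∀ v ∈ P, v ≠ x → ∃ w ∈ P, G v w := by
    intro v hv hne
    rcases hv.2.cases_head with e | ⟨w, h1, h2⟩
    · exact absurd e hne
    · exact ⟨w, ⟨hv.1.tail h1, h2⟩, h1⟩
  have hprev : ∀ v ∈ P, v ≠ z → ∃ w ∈ P, G w v := by
    intro v hv hne
    rcases hv.1.cases_tail with e | ⟨w, h1, h2⟩
    · exact absurd e hne
    · exact ⟨w, ⟨h1, hv.2.head h2⟩, h2⟩
  -- A point of `P` that is matched has its neighbour along the chain as partner, so matched points
  -- of `P` have their partner in `P`.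
  have hpart : ∀ u v, (u, v) ∈ M → (u ∈ P ↔ v ∈ P) := by
    intro u v huv
    constructor
    · intro hu
      obtain ⟨w, hw, hs⟩ := hnext u hu (by rintro rfl; exact (hx _ huv).1 rfl)
      rcases hs with ⟨h1, -⟩ | ⟨h1, -⟩
      · have := hMm.eq_of_mem huv h1 u (.inl rfl) (.inl rfl)
        simp only [Prod.mk.injEq, true_and] at this
        exact this ▸ hw
      · have := hh _ _ h1
        rcases hdeg u hu with h2 | h2
        · rcases hdeg w hw with h3 | h3 <;> omega
        · exact absurd huv (h2.2 v)
    · intro hv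
      obtain ⟨w, hw, hs⟩ := hprev v hv (by rintro rfl; exact (hz _ huv).2 rfl)
      rcases hs with ⟨h1, -⟩ | ⟨h1, -⟩
      · have := hMm.eq_of_mem huv h1 v (.inr rfl) (.inr rfl)
        simp only [Prod.mk.injEq, and_true] at this
        exact this ▸ hw
      · have := hh _ _ h1
        rcases hdeg v hv with h2 | h2
        · exact absurd huv (h2.2 u)
        · rcases hdeg w hw with h3 | h3 <;> omega
  have hdown : ∀ v u u', v ∈ P → u ∈ P → u' ∈ P → u ⋖ v → u' ⋖ v → (u, v) ∉ M → (u', v) ∉ M →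
      u = u' := by
    intro v u u' hv hu hu' h1 h1' h2 h2'
    have e1 := hh _ _ h1
    have e2 := hh _ _ h1'
    have hvp : h v = p + 1 := by
      rcases hdeg v hv with h3 | h3
      · rcases hdeg u hu with h4 | h4 <;> omega
      · exact h3.1
    obtain ⟨w, σ, -, -, hun⟩ := (htail v hv).2.2 hvp
    obtain ⟨τ, hτ⟩ := (exists_mpath hh hMm hx hpx hu.2).1 (by omega)
    obtain ⟨τ', hτ'⟩ := (exists_mpath hh hMm hx hpx hu'.2).1 (by omega)
    exact (hun u τ h1 h2 hτ).1.trans (hun u' τ' h1' h2' hτ').1.symm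
  let R : X → X → Prop := fun u v => G u v ∧ u ∈ P ∧ v ∈ P
  have hRu : Relator.RightUnique R := by
    rintro a b c ⟨h1, ha, hb⟩ ⟨h2, -, hc⟩
    rcases h1 with ⟨h1, k1⟩ | ⟨h1, k1⟩ <;> rcases h2 with ⟨h2, k2⟩ | ⟨h2, k2⟩
    · have := hMm.eq_of_mem h1 h2 a (.inl rfl) (.inl rfl)
      simpa using this
    · have := hh _ _ k1
      have := hh _ _ h2
      rcases hdeg b hb with h3 | h3 <;> rcases hdeg c hc with h4 | h4 <;> omega
    · have := hh _ _ h1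
      have := hh _ _ k2
      rcases hdeg b hb with h3 | h3 <;> rcases hdeg c hc with h4 | h4 <;> omega
    · exact hdown a b c ha hb hc h1 h2 k1 k2
  have hRz : ∀ v ∈ P, ReflTransGen R z v := by
    rintro v ⟨hv, hvx⟩
    induction hv with
    | refl => exact .refl
    | tail h1 h2 ih =>
      exact (ih (hvx.head h2)).tail ⟨h2, ⟨h1, hvx.head h2⟩, ⟨h1.tail h2, hvx⟩⟩
  have hRG : ∀ a b, ReflTransGen R a b → ReflTransGen G a b := fun a b hab =>
    ReflTransGen.mono (fun _ _ k => k.1) _ _ hab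
  -- If `v ≠ w` both precede `u`, one of them, say `v`, comes first on the chain `P`; its only
  -- successor `u` then leads to `w` and back to `u`.
  have hup0 : ∀ u v w, R v u → R w u → ReflTransGen R v w → v = w := by
    intro u v w hv hw hvw
    rcases hvw.cases_head with e | ⟨u', h1, h2⟩
    · exact e
    · obtain rfl : u = u' := hRu hv h1
      exact absurd (TransGen.tail' (hRG _ _ h2) hw.1) (hac u)
  have hup : ∀ u v w, R v u → R w u → v = w := by
    intro u v w hv hw
    rcases ReflTransGen.total_of_right_unique hRu (hRz v hv.2.1) (hRz w hw.2.1) with k | k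
    · exact hup0 u v w hv hw k
    · exact (hup0 u w v hw hv k).symm
  -- Outside `P` nothing changes; between points of `P` the pairs of `M` are exchanged for the
  -- covering pairs not in `M`.
  let M' : Set (X × X) := {q | q.1 ⋖ q.2 ∧ ((q ∈ M ∧ ¬ (q.1 ∈ P ∧ q.2 ∈ P)) ∨
    (q ∉ M ∧ q.1 ∈ P ∧ q.2 ∈ P))}
  have hcov : ∀ v ∈ P, ∃ q ∈ M', v = q.1 ∨ v = q.2 := by
    intro v hv
    rcases hdeg v hv with h1 | h1
    · obtain ⟨w, hw, hs⟩ := hprev v hv (by rintro rfl; omega)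
      rcases hs with ⟨h2, -⟩ | ⟨h2, h3⟩
      · exact absurd h2 (h1.2 w)
      · exact ⟨(v, w), ⟨h2, .inr ⟨h3, hv, hw⟩⟩, .inl rfl⟩
    · obtain ⟨w, hw, hs⟩ := hnext v hv (by rintro rfl; omega)
      rcases hs with ⟨h2, -⟩ | ⟨h2, h3⟩
      · exact absurd h2 (h1.2 w)
      · exact ⟨(w, v), ⟨h2, .inr ⟨h3, hw, hv⟩⟩, .inr rfl⟩
  have hnew : ∀ q ∈ M', ∀ a ∈ P, (q.1 = a ∨ q.2 = a) → q ∉ M ∧ q.1 ∈ P ∧ q.2 ∈ P := by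
    rintro ⟨u, v⟩ ⟨-, ⟨hq, hn⟩ | hq⟩ a ha hqa
    · refine absurd ?_ hn
      have := hpart u v hq
      rcases hqa with rfl | rfl
      · exact ⟨ha, this.1 ha⟩
      · exact ⟨this.2 ha, ha⟩
    · exact hq
  have hold : ∀ q ∈ M', ∀ a ∉ P, (q.1 = a ∨ q.2 = a) → q ∈ M := by
    rintro ⟨u, v⟩ ⟨-, ⟨hq, hn⟩ | hq⟩ a ha hqa
    · exact hq
    · rcases hqa with rfl | rfl
      · exact absurd hq.2.1 ha
      · exact absurd hq.2.2 ha
  have hzx : ReflTransGen G z x := by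
    have aux : ∀ (σ : List (X × X)) (a : X), IsMPath M a σ x → ReflTransGen G a x := by
      intro σ
      induction σ with
      | nil => rintro a rfl; exact .refl
      | cons q σ ih =>
        rintro a ⟨⟨h1, h2, h3, h4⟩, h5⟩
        refine .head (.inl ⟨h1, h2⟩) (.head (.inr ⟨h3, fun h6 => h4 ?_⟩) (ih _ h5))
        have := hMm.eq_of_mem h6 h1 q.1 (.inr rfl) (.inr rfl)
        exact congrArg Prod.fst this
    exact .head (.inr ⟨hyz, fun k => (hz _ k).2 rfl⟩) (aux γ y hγ)
  refine ⟨M', ⟨⟨fun q hq => hq.1, ?_⟩, ?_⟩, ?_, ?_⟩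
  · rintro a q ⟨hq, hqa⟩ r ⟨hr, hra⟩
    by_cases ha : a ∈ P
    · obtain ⟨hqM, hq1, hq2⟩ := hnew q hq a ha hqa
      obtain ⟨hrM, hr1, hr2⟩ := hnew r hr a ha hra
      have e1 := hh _ _ hq.1
      have e2 := hh _ _ hr.1
      have d1 := hdeg _ hq1
      have d2 := hdeg _ hq2
      have d3 := hdeg _ hr1
      have d4 := hdeg _ hr2
      rcases hqa with hqa | hqa <;> rcases hra with hra | hra
      · have e : q.1 = r.1 := hqa.trans hra.symm
        refine Prod.ext e (hup q.1 q.2 r.2 ⟨.inr ⟨hq.1, hqM⟩, hq2, hq1⟩ ⟨.inr ⟨?_, ?_⟩, hr2, hq1⟩)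
        · exact e ▸ hr.1
        · rw [e]; exact hrM
      · have e : h q.1 = h r.2 := by rw [hqa, hra]
        omega
      · have e : h q.2 = h r.1 := by rw [hqa, hra]
        omega
      · have e : q.2 = r.2 := hqa.trans hra.symm
        refine Prod.ext (hdown q.2 q.1 r.1 hq2 hq1 hr1 hq.1 (e ▸ hr.1) hqM ?_) e
        rw [e]; exact hrM
    · exact hMm.eq_of_mem (hold q hq a ha hqa) (hold r hr a ha hra) a hqa hra
  · refine acyclic_of_reverse (G := G) (z := z) (x := x) hac ?_
    rintro u v (⟨⟨-, ⟨h1, h2⟩ | ⟨h1, h2⟩⟩, h3⟩ | ⟨h1, h2⟩)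
    · exact .inl ⟨.inl ⟨h1, h3⟩, h2⟩
    · exact .inr ⟨.inr ⟨h3, h1⟩, h2⟩
    · by_cases hb : u ∈ P ∧ v ∈ P
      · have : (v, u) ∈ M := by
          by_contra hn
          exact h2 ⟨h1, .inr ⟨hn, hb.2, hb.1⟩⟩
        exact .inr ⟨.inl ⟨this, h1⟩, hb⟩
      · have : (v, u) ∉ M := fun hn => h2 ⟨h1, .inl ⟨hn, fun k => hb ⟨k.2, k.1⟩⟩⟩
        exact .inl ⟨.inr ⟨h1, this⟩, hb⟩
  · have hxP : x ∈ P := ⟨hzx, .refl⟩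
    have hzP : z ∈ P := ⟨.refl, hzx⟩
    ext a
    simp only [Set.mem_sdiff, Set.mem_insert_iff, Set.mem_singleton_iff]
    constructor
    · intro ha
      have haP : a ∉ P := by
        intro hP
        obtain ⟨q, hq, h1 | h1⟩ := hcov a hP
        · exact (ha q hq).1 h1
        · exact (ha q hq).2 h1
      refine ⟨fun q hq => ?_, ?_⟩
      · by_cases hb : q.1 ∈ P ∧ q.2 ∈ P
        · exact ⟨fun e => haP (e ▸ hb.1), fun e => haP (e ▸ hb.2)⟩
        · exact ha q ⟨hMm.1 q hq, .inl ⟨hq, hb⟩⟩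
      · rintro (rfl | rfl)
        · exact haP hxP
        · exact haP hzP
    · rintro ⟨ha, hne⟩
      push Not at hne
      have haP : a ∉ P := by
        intro hP
        rcases hdeg a hP with h1 | h1
        · obtain ⟨w, hw, hs⟩ := hnext a hP hne.1
          rcases hs with ⟨h2, -⟩ | ⟨h2, -⟩
          · exact (ha _ h2).1 rfl
          · have := hh _ _ h2
            rcases hdeg w hw with h3 | h3 <;> omega
        · obtain ⟨w, hw, hs⟩ := hprev a hP hne.2
          rcases hs with ⟨h2, -⟩ | ⟨h2, -⟩
          · exact (ha _ h2).2 rfl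
          · have := hh _ _ h2
            rcases hdeg w hw with h3 | h3 <;> omega
      refine fun q hq => ⟨fun e => ?_, fun e => ?_⟩
      · exact (ha q (hold q hq a haP (.inl e.symm))).1 e
      · exact (ha q (hold q hq a haP (.inr e.symm))).2 e
  · intro q hq1 _
    have hq : q.1 ∉ P := fun k => hq1 (htail _ k).1
    constructor
    · exact fun k => hold q k q.1 hq (.inl rfl)
    · exact fun k => ⟨hMm.1 q k, .inl ⟨k, fun k' => hq k'.1⟩⟩
end
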